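/- Let H be a complex Hilbert space, d ≥ 2, and A = (A_1,…,A_d) a commuting row contraction on H. Let N = {n ∈ ℕ^d : A^n = 0} and X = ℕ^d∖N. Then for every complex polynomial Q in d variables, ‖Q(A)‖ ≤ ‖Q(B^X)‖ ≤ inf{ ‖φ‖_{M(H_d)} : φ a multiplier of H_d whose Taylor coefficients satisfy φ̂(n) = Q̂(n) for all n ∈ X }. -/

import Mathlib

open scoped BigOperators ComplexConjugate

noncomputable section

namespace DruryArveson

/-- Multi-indices. -/
abbrev Idx (d : ℕ) := Fin d → ℕ

/-- The weight `β(n) = |n|!/n!`. -/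
def beta (d : ℕ) (n : Idx d) : ℝ :=
  ((∑ j, n j).factorial : ℝ) / ∏ j, ((n j).factorial : ℝ)

/-- standard basis multi-index `e_j`. -/
def e (d : ℕ) (j : Fin d) : Idx d := fun i => if i = j then 1 else 0

/-- A set `X ⊆ ℕ^d` is monotone if its complement is shift invariant. -/
def MonotoneSet (d : ℕ) (X : Set (Idx d)) : Prop :=
  ∀ n, n ∉ X → ∀ j, n + e d j ∉ X

/-- membership in the Drury–Arveson space (coefficientwise). -/
def MemHd (d : ℕ) (a : Idx d → ℂ) : Prop :=
  Summable fun n => ‖a n‖ ^ 2 / beta d n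

/-- the Drury–Arveson norm. -/
def hdNorm (d : ℕ) (a : Idx d → ℂ) : ℝ :=
  Real.sqrt (∑' n, ‖a n‖ ^ 2 / beta d n)

/-- the Drury–Arveson inner product. -/
def hdInner (d : ℕ) (a b : Idx d → ℂ) : ℂ :=
  ∑' n, a n * conj (b n) / (beta d n : ℂ)

/-- membership in `H_d(X)`. -/
def MemHdX (d : ℕ) (X : Set (Idx d)) (a : Idx d → ℂ) : Prop :=
  (∀ n ∉ X, a n = 0) ∧ MemHd d a

/-- membership in `ℓ²(X, β)`. -/
def MemL2 (d : ℕ) (X : Set (Idx d)) (g : Idx d → ℂ) : Prop :=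
  (∀ n ∉ X, g n = 0) ∧ Summable fun n => ‖g n‖ ^ 2 * beta d n

/-- the norm of `ℓ²(ℕ^d, β)`. -/
def l2Norm (d : ℕ) (g : Idx d → ℂ) : ℝ :=
  Real.sqrt (∑' n, ‖g n‖ ^ 2 * beta d n)

/-- the inner product of `ℓ²(ℕ^d, β)`. -/
def l2Inner (d : ℕ) (g h : Idx d → ℂ) : ℂ :=
  ∑' n, g n * conj (h n) * (beta d n : ℂ)

/-- the compressed backshift `B_j^X = P_X B_j|_{ℓ²(X,β)}`. -/
def BXop (d : ℕ) (X : Set (Idx d)) (j : Fin d) (g : Idx d → ℂ) : Idx d → ℂ :=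
  X.indicator fun n => g (n + e d j)

/-- ordered power `(T_1)^{k_1} ∘ ⋯ ∘ (T_d)^{k_d}` of a `d`-tuple of maps. -/
def opPow (d : ℕ) {α : Type*} (T : Fin d → (α → α)) (k : Idx d) : α → α :=
  (List.ofFn fun j => (T j)^[k j]).foldr (· ∘ ·) id

/-- multiplication by `z_j` on coefficients. -/
def Mop (d : ℕ) (j : Fin d) (a : Idx d → ℂ) : Idx d → ℂ :=
  fun n => if 0 < n j then a (n - e d j) else 0

/-- the compressed multiplication `M_j^X = P_X M_j|_{H_d(X)}`. -/
def MopX (d : ℕ) (X : Set (Idx d)) (j : Fin d) (a : Idx d → ℂ) : Idx d → ℂ :=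
  X.indicator (Mop d j a)

/-- the Taylor coefficients of a polynomial of `d` variables. -/
def Qhat (d : ℕ) (Q : MvPolynomial (Fin d) ℂ) (n : Idx d) : ℂ :=
  Q.coeff (Finsupp.equivFunOnFinite.symm n)

/-- `Q(T)` for a `d`-tuple of maps on the coefficient space. -/
def polyOp (d : ℕ) (Q : MvPolynomial (Fin d) ℂ)
    (T : Fin d → ((Idx d → ℂ) → (Idx d → ℂ))) (a : Idx d → ℂ) : Idx d → ℂ :=
  fun n => ∑ k ∈ Q.support, Q.coeff k * opPow d T (⇑k) a n

/-- operator norm of a map with respect to the `ℓ²(X,β)` norm. -/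
def opNormL2 (d : ℕ) (X : Set (Idx d)) (T : (Idx d → ℂ) → (Idx d → ℂ)) : ℝ :=
  sInf {C | 0 ≤ C ∧ ∀ g, MemL2 d X g → l2Norm d (T g) ≤ C * l2Norm d g}

/-- operator norm of a map with respect to the `H_d(X)` norm. -/
def opNormHdX (d : ℕ) (X : Set (Idx d)) (T : (Idx d → ℂ) → (Idx d → ℂ)) : ℝ :=
  sInf {C | 0 ≤ C ∧ ∀ a, MemHdX d X a → hdNorm d (T a) ≤ C * hdNorm d a}

/-- coefficients of the product `φ · f` of two power series. -/
def mconv (d : ℕ) (φ a : Idx d → ℂ) (m : Idx d) : ℂ :=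
  ∑ k ∈ Finset.Iic m, φ k * a (m - k)

/-- `φ` is a multiplier of `H_d`. -/
def IsMultiplier (d : ℕ) (φ : Idx d → ℂ) : Prop :=
  ∀ a, MemHd d a → MemHd d (mconv d φ a)

/-- the multiplier norm `‖φ‖_{M(H_d)}`. -/
def multNorm (d : ℕ) (φ : Idx d → ℂ) : ℝ :=
  sInf {C | 0 ≤ C ∧ ∀ a, MemHd d a → hdNorm d (mconv d φ a) ≤ C * hdNorm d a}

/-- `A^n = A_1^{n_1} ⋯ A_d^{n_d}` for a tuple of bounded operators. -/
def ApowCLM (d : ℕ) {H : Type*} [NormedAddCommGroup H] [NormedSpace ℂ H]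
    (A : Fin d → H →L[ℂ] H) (n : Idx d) : H →L[ℂ] H :=
  (List.ofFn fun j => A j ^ n j).prod

/-- `Q(A) = ∑ c_k A^k` for a tuple of bounded operators. -/
def QevalCLM (d : ℕ) {H : Type*} [NormedAddCommGroup H] [NormedSpace ℂ H]
    (A : Fin d → H →L[ℂ] H) (Q : MvPolynomial (Fin d) ℂ) : H →L[ℂ] H :=
  ∑ k ∈ Q.support, Q.coeff k • ApowCLM d A ⇑k

/-- monomial `z^n`. -/
def mpow (d : ℕ) (z : Fin d → ℂ) (n : Idx d) : ℂ := ∏ j, z j ^ n j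


/-! ### Monoid lemmas -/

lemma listPow_comm {M : Type*} [Monoid M] (d : ℕ) (A : Fin d → M) (x : M)
    (h : ∀ j, Commute x (A j)) (n : Fin d → ℕ) :
    Commute x (List.ofFn fun j => A j ^ n j).prod := by
  apply Commute.list_prod_right
  intro y hy
  rw [List.mem_ofFn] at hy
  obtain ⟨j, rfl⟩ := hy
  exact (h j).pow_right _

lemma listPow_add {M : Type*} [Monoid M] (d : ℕ) (A : Fin d → M)
    (h : ∀ i j, Commute (A i) (A j)) (n k : Fin d → ℕ) :
    (List.ofFn fun j => A j ^ (n + k) j).prod =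
      (List.ofFn fun j => A j ^ n j).prod * (List.ofFn fun j => A j ^ k j).prod := by
  induction d with
  | zero => simp
  | succ d ih =>
    simp only [List.ofFn_succ, List.prod_cons]
    have := ih (fun j => A j.succ) (fun i j => h _ _) (fun j => n j.succ) (fun j => k j.succ)
    simp only [Pi.add_apply] at this ⊢
    rw [this, pow_add]
    have hc : Commute (A 0 ^ k 0) (List.ofFn fun j : Fin d => A j.succ ^ n j.succ).prod :=
      listPow_comm d _ _ (fun j => (h _ _).pow_left _) _
    have hc := hc.eq
    simp only [mul_assoc]
    rw [← mul_assoc (A 0 ^ k 0), hc, mul_assoc]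

lemma listPow_single {M : Type*} [Monoid M] (d : ℕ) (A : Fin d → M) (j : Fin d) :
    (List.ofFn fun i => A i ^ (if i = j then 1 else 0)).prod = A j := by
  induction d with
  | zero => exact j.elim0
  | succ d ih =>
    simp only [List.ofFn_succ, List.prod_cons]
    refine Fin.cases ?_ (fun j => ?_) j
    · simp
    · have := ih (fun i => A i.succ) j
      have h0 : (0 : Fin (d+1)) ≠ j.succ := (Fin.succ_ne_zero j).symm
      simp only [h0, if_false, pow_zero, one_mul, Fin.succ_inj]
      exact this

/-! ### The weight -/

lemma beta_pos (d : ℕ) (n : Idx d) : 0 < beta d n := by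
  unfold beta
  have : 0 < ∏ j, ((n j).factorial : ℝ) := Finset.prod_pos fun j _ => by positivity
  positivity

lemma sum_e (d : ℕ) (j : Fin d) : ∑ i, e d j i = 1 := by simp [e]

lemma sum_add_e (d : ℕ) (n : Idx d) (j : Fin d) : ∑ i, (n + e d j) i = ∑ i, n i + 1 := by
  simp [Finset.sum_add_distrib, sum_e]

lemma beta_add_e (d : ℕ) (n : Idx d) (j : Fin d) :
    beta d (n + e d j) * (n j + 1) = beta d n * (∑ i, (n i : ℝ) + 1) := by
  unfold beta
  rw [sum_add_e, Nat.factorial_succ]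
  have h : ∏ i, (((n + e d j) i).factorial : ℝ) = (∏ i, ((n i).factorial : ℝ)) * (n j + 1) := by
    rw [← Finset.mul_prod_erase _ _ (Finset.mem_univ j),
      ← Finset.mul_prod_erase _ (fun i => ((n i).factorial : ℝ)) (Finset.mem_univ j)]
    have : ∏ i ∈ Finset.univ.erase j, (((n + e d j) i).factorial : ℝ) =
        ∏ i ∈ Finset.univ.erase j, ((n i).factorial : ℝ) := by
      apply Finset.prod_congr rfl
      intro i hi
      simp [e, Finset.ne_of_mem_erase hi]
    rw [this]
    simp [e, Nat.factorial_succ]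
    ring
  rw [h]
  have : 0 < ∏ j, ((n j).factorial : ℝ) := Finset.prod_pos fun j _ => by positivity
  push_cast
  field_simp

lemma sub_add_e (d : ℕ) (m : Idx d) (j : Fin d) (h : 0 < m j) : m - e d j + e d j = m := by
  funext i
  by_cases hi : i = j
  · subst hi; simp [e]; omega
  · simp [e, hi]

lemma beta_sub_e (d : ℕ) (m : Idx d) (j : Fin d) (h : 0 < m j) :
    beta d (m - e d j) * (∑ i, (m i : ℝ)) = beta d m * m j := by
  have h1 := beta_add_e d (m - e d j) j
  have h2 := sum_add_e d (m - e d j) j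
  rw [sub_add_e d m j h] at h1 h2
  have h3 : (((m - e d j) j : ℕ) : ℝ) + 1 = m j := by
    have : (m - e d j) j + 1 = m j := by simp [e]; omega
    exact_mod_cast this
  have h4 : ∑ i, (((m - e d j) i : ℕ) : ℝ) + 1 = ∑ i, (m i : ℝ) := by exact_mod_cast h2.symm
  rw [h3, h4] at h1
  exact h1.symm

lemma beta_le_add_e (d : ℕ) (n : Idx d) (j : Fin d) : beta d n ≤ beta d (n + e d j) := by
  have h := beta_add_e d n j
  have h1 : (n j : ℝ) ≤ ∑ i, (n i : ℝ) :=
    Finset.single_le_sum (f := fun i => (n i : ℝ)) (fun i _ => by positivity) (Finset.mem_univ j)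
  have h2 := beta_pos d n
  have h3 : (0:ℝ) < n j + 1 := by positivity
  nlinarith

lemma sum_smul_e (d : ℕ) (k : Idx d) : ∑ j, k j • e d j = k := by
  funext i
  simp [e, Finset.sum_apply]

lemma idx_induction (d : ℕ) {p : Idx d → Prop} (h0 : p 0) (hs : ∀ n j, p n → p (n + e d j))
    (n : Idx d) : p n := by
  induction hN : ∑ i, n i generalizing n with
  | zero =>
    have : n = 0 := by
      funext i
      exact (Finset.sum_eq_zero_iff.mp hN) i (Finset.mem_univ i)
    rwa [this]
  | succ N ih =>
    have : ∃ j, 0 < n j := by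
      by_contra hcon
      push Not at hcon
      have : ∑ i, n i = 0 := Finset.sum_eq_zero fun i _ => Nat.le_zero.mp (hcon i)
      omega
    obtain ⟨j, hj⟩ := this
    rw [← sub_add_e d n j hj]
    apply hs
    apply ih
    have := sum_add_e d (n - e d j) j
    rw [sub_add_e d n j hj] at this
    omega

lemma beta_le_add (d : ℕ) (n k : Idx d) : beta d n ≤ beta d (n + k) := by
  induction k using idx_induction with
  | h0 => simp
  | hs k j ih =>
    rw [← add_assoc]
    exact ih.trans (beta_le_add_e d _ _)

lemma monotone_add (d : ℕ) (X : Set (Idx d)) (hX : MonotoneSet d X) (n k : Idx d) (hn : n ∉ X) :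
    n + k ∉ X := by
  induction k using idx_induction with
  | h0 => simpa
  | hs k j ih =>
    rw [← add_assoc]
    exact hX _ ih j

lemma beta_pascal (d : ℕ) (m : Idx d) (hm : m ≠ 0) :
    beta d m = ∑ j, if 0 < m j then beta d (m - e d j) else 0 := by
  have hs : 0 < ∑ i, (m i : ℝ) := by
    have : ∃ j, 0 < m j := by
      by_contra hcon
      push Not at hcon
      exact hm (funext fun i => Nat.le_zero.mp (hcon i))
    obtain ⟨j, hj⟩ := this
    exact Finset.sum_pos' (fun i _ => by positivity) ⟨j, Finset.mem_univ _, by exact_mod_cast hj⟩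
  have : ∀ j, (if 0 < m j then beta d (m - e d j) else 0) = beta d m * m j / ∑ i, (m i : ℝ) := by
    intro j
    split_ifs with h
    · rw [← beta_sub_e d m j h]; field_simp
    · have : m j = 0 := by omega
      simp [this]
  rw [Finset.sum_congr rfl fun j _ => this j, ← Finset.sum_div, ← Finset.mul_sum]
  field_simp

lemma pascal_tsum (d : ℕ) (F : Idx d → ENNReal) :
    ∑' m, ENNReal.ofReal (beta d m) * F m =
      F 0 + ∑' n, ENNReal.ofReal (beta d n) * ∑ j, F (n + e d j) := by
  classical
  have hb0 : beta d 0 = 1 := by simp [beta]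
  have key : ∀ m, ENNReal.ofReal (beta d m) * F m = (if m = 0 then F 0 else 0) +
      ∑ j, if 0 < m j then ENNReal.ofReal (beta d (m - e d j)) * F m else 0 := by
    intro m
    by_cases hm : m = 0
    · subst hm; simp [hb0]
    · simp only [hm, if_false, zero_add]
      rw [beta_pascal d m hm, ENNReal.ofReal_sum_of_nonneg, Finset.sum_mul]
      · apply Finset.sum_congr rfl
        intro j _
        split_ifs <;> simp
      · intro j _
        split_ifs
        · exact (beta_pos _ _).le
        · exact le_rfl
  rw [tsum_congr key, ENNReal.tsum_add, tsum_ite_eq]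
  congr 1
  simp only [Finset.mul_sum]
  rw [Summable.tsum_finsetSum (fun _ _ => ENNReal.summable),
    Summable.tsum_finsetSum (fun _ _ => ENNReal.summable)]
  apply Finset.sum_congr rfl
  intro j _
  have hinj : Function.Injective (fun n : Idx d => n + e d j) := fun a b h => by
    simpa using h
  rw [← hinj.tsum_eq]
  · apply tsum_congr
    intro n
    have : 0 < (n + e d j) j := by simp [e]
    simp only [this, if_true, add_tsub_cancel_right]
  · intro m hm
    have : 0 < m j := by
      by_contra hc
      simp [hc] at hm
    exact ⟨m - e d j, sub_add_e d m j this⟩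

/-! ### Shifts and `polyOp` -/

lemma foldr_BX (d : ℕ) (X : Set (Idx d)) (hX : MonotoneSet d X) (m : ℕ) (σ : Fin m → Fin d)
    (k : Fin m → ℕ) (g : Idx d → ℂ) (hg : ∀ n ∉ X, g n = 0) :
    (List.ofFn fun j => (BXop d X (σ j))^[k j]).foldr (· ∘ ·) id g =
      fun n => g (n + ∑ j, k j • e d (σ j)) := by
  have one : ∀ (j : Fin d) (t : ℕ) (g : Idx d → ℂ), (∀ n ∉ X, g n = 0) →
      (BXop d X j)^[t] g = fun n => g (n + t • e d j) := by
    intro j t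
    induction t with
    | zero => intro g hg; simp
    | succ t ih =>
      intro g hg
      rw [Function.iterate_succ_apply]
      have h1 : BXop d X j g = fun n => g (n + e d j) := by
        funext n
        unfold BXop
        by_cases hn : n ∈ X
        · simp [hn]
        · simp [hn, hg _ (hX n hn j)]
      rw [h1, ih]
      · funext n
        congr 1
        rw [succ_nsmul, add_assoc]
      · intro n hn
        exact hg _ (hX n hn j)
  induction m with
  | zero => simp
  | succ m ih =>
    simp only [List.ofFn_succ, List.foldr_cons, Function.comp]
    have := ih (fun j => σ j.succ) (fun j => k j.succ)
    rw [this, one]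
    · funext n
      rw [Fin.sum_univ_succ, add_assoc]
    · intro n hn
      exact hg _ (monotone_add d X hX _ _ hn)

lemma polyOp_BX (d : ℕ) (X : Set (Idx d)) (hX : MonotoneSet d X) (Q : MvPolynomial (Fin d) ℂ)
    (g : Idx d → ℂ) (hg : ∀ n ∉ X, g n = 0) (n : Idx d) :
    polyOp d Q (BXop d X) g n = ∑ k ∈ Q.support, Q.coeff k * g (n + ⇑k) := by
  unfold polyOp opPow
  apply Finset.sum_congr rfl
  intro k _
  rw [foldr_BX d X hX d (fun j => j) (⇑k) g hg, sum_smul_e]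

/-! ### Multipliers -/

lemma norm_sum_mul_sq_le {ι : Type*} (S : Finset ι) (c x : ι → ℂ) :
    ‖∑ k ∈ S, c k * x k‖ ^ 2 ≤ (∑ k ∈ S, ‖c k‖ ^ 2) * ∑ k ∈ S, ‖x k‖ ^ 2 := by
  have h1 : ‖∑ k ∈ S, c k * x k‖ ≤ ∑ k ∈ S, ‖c k‖ * ‖x k‖ :=
    (norm_sum_le _ _).trans (le_of_eq (by simp))
  calc _ ≤ (∑ k ∈ S, ‖c k‖ * ‖x k‖) ^ 2 := by gcongr
    _ ≤ _ := Finset.sum_mul_sq_le_sq_mul_sq _ _ _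

/-- finite support multipliers -/
lemma finite_isMultiplier (d : ℕ) (q : Idx d → ℂ) (S : Finset (Idx d)) (hq : ∀ k ∉ S, q k = 0) :
    IsMultiplier d q := by
  classical
  intro a ha
  have h1 : ∀ m, mconv d q a m = ∑ k ∈ S, q k * (if k ≤ m then a (m - k) else 0) := by
    intro m
    unfold mconv
    simp only [mul_ite, mul_zero]
    rw [← Finset.sum_filter]
    symm
    apply Finset.sum_subset_zero_on_sdiff
    · intro k hk; simp at hk ⊢; exact hk.2
    · intro k hk
      simp at hk
      have : k ∉ S := fun h => hk.2 h hk.1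
      simp [hq k this]
    · intros; rfl
  have h2 : ∀ k : Idx d, Summable fun m => ‖if k ≤ m then a (m - k) else 0‖ ^ 2 / beta d m := by
    intro k
    have hinj : Function.Injective (fun n : Idx d => n + k) := fun a b h => by simpa using h
    rw [← hinj.summable_iff]
    · refine Summable.of_nonneg_of_le (fun n => ?_) (fun n => ?_) ha
      · exact div_nonneg (by positivity) (beta_pos d _).le
      · simp only [Function.comp, le_add_iff_nonneg_left, zero_le, if_true, add_tsub_cancel_right]
        have := beta_pos d n
        have := beta_le_add d n k
        gcongr
    · intro m hm
      have : ¬ k ≤ m := fun h => hm ⟨m - k, tsub_add_cancel_of_le h⟩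
      simp [this]
  unfold MemHd
  refine Summable.of_nonneg_of_le (fun n => div_nonneg (by positivity) (beta_pos d _).le)
    (fun n => ?_) ((summable_sum (s := S) fun k _ => h2 k).mul_left (∑ k ∈ S, ‖q k‖ ^ 2))
  rw [h1, ← Finset.sum_div, ← mul_div_assoc]
  have := beta_pos d n
  gcongr
  exact norm_sum_mul_sq_le _ _ _

lemma mconv_eq (d : ℕ) (φ f : Idx d → ℂ) (m : Idx d) :
    mconv d φ f m = ∑ n ∈ Finset.Iic m, φ (m - n) * f n := by
  unfold mconv
  refine Finset.sum_nbij' (fun k => m - k) (fun k => m - k) ?_ ?_ ?_ ?_ ?_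
  · intro k hk; simp
  · intro k hk; simp
  · intro k hk; rw [Finset.mem_Iic] at hk; funext i; have : k i ≤ m i := hk i; simp; omega
  · intro k hk; rw [Finset.mem_Iic] at hk; funext i; have : k i ≤ m i := hk i; simp; omega
  · intro k hk; rw [Finset.mem_Iic] at hk
    congr 2
    funext i; have : k i ≤ m i := hk i; simp; omega

lemma transfer (d : ℕ) (X : Set (Idx d)) (hX : MonotoneSet d X) (q φ : Idx d → ℂ)
    (S : Finset (Idx d)) (hq : ∀ k ∉ S, q k = 0) (hφ : IsMultiplier d φ)
    (hφq : ∀ n ∈ X, φ n = q n) (M : ℝ) (hM : 0 ≤ M)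
    (hb : ∀ a, MemHd d a → hdNorm d (mconv d φ a) ≤ M * hdNorm d a)
    (g : Idx d → ℂ) (hg : MemL2 d X g) (F : Finset (Idx d)) :
    ∑ n ∈ F, ‖∑ k ∈ S, q k * g (n + k)‖ ^ 2 * beta d n ≤ (M * l2Norm d g) ^ 2 := by
  classical
  set G : Idx d → ℂ := fun n => ∑ k ∈ S, q k * g (n + k) with hG
  set f : Idx d → ℂ := fun n => if n ∈ F then conj (G n) * (beta d n : ℂ) else 0 with hf
  set s : ℝ := ∑ n ∈ F, ‖G n‖ ^ 2 * beta d n with hs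
  have hs0 : 0 ≤ s := Finset.sum_nonneg fun n _ => mul_nonneg (by positivity) (beta_pos d n).le
  set T : Finset (Idx d) := (F ×ˢ S).image (fun p => p.1 + p.2) with hT
  -- norm of f
  have hfn : ∀ n, ‖f n‖ ^ 2 / beta d n = if n ∈ F then ‖G n‖ ^ 2 * beta d n else 0 := by
    intro n
    have := beta_pos d n
    simp only [hf]
    split_ifs
    · rw [norm_mul, RCLike.norm_conj, Complex.norm_real, Real.norm_eq_abs, abs_of_pos this]
      field_simp
    · simp
  have hfm : MemHd d f := by
    unfold MemHd
    refine summable_of_ne_finset_zero (s := F) ?_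
    intro n hn
    rw [hfn, if_neg hn]
  have hfN : hdNorm d f = Real.sqrt s := by
    unfold hdNorm
    rw [tsum_eq_sum (s := F)]
    · rw [hs]
      congr 1
      apply Finset.sum_congr rfl
      intro n hn
      rw [hfn, if_pos hn]
    · intro n hn
      rw [hfn, if_neg hn]
  -- the pairing
  have hpair : (s : ℂ) = ∑ m ∈ T, g m * mconv d φ f m := by
    have h1 : ∀ m, g m * mconv d φ f m =
        ∑ n ∈ F, f n * (if n ≤ m then q (m - n) * g m else 0) := by
      intro m
      rw [mconv_eq, Finset.mul_sum]
      have e1 : ∑ n ∈ Finset.Iic m, g m * (φ (m - n) * f n) =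
          ∑ n ∈ Finset.Iic m, f n * (if n ≤ m then q (m - n) * g m else 0) := by
        apply Finset.sum_congr rfl
        intro n hn
        rw [Finset.mem_Iic] at hn
        rw [if_pos hn]
        by_cases hm : m ∈ X
        · have : m - n ∈ X := by
            by_contra hc
            have := monotone_add d X hX _ n hc
            rw [tsub_add_cancel_of_le hn] at this
            exact this hm
          rw [hφq _ this]; ring
        · simp [hg.1 m hm]
      rw [e1]
      have e2 : ∑ n ∈ Finset.Iic m ∩ F, f n * (if n ≤ m then q (m - n) * g m else 0) =
          ∑ n ∈ Finset.Iic m, f n * (if n ≤ m then q (m - n) * g m else 0) := by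
        apply Finset.sum_subset Finset.inter_subset_left
        intro n h1 h2
        have : n ∉ F := fun h => h2 (Finset.mem_inter.mpr ⟨h1, h⟩)
        simp [hf, this]
      rw [← e2]
      apply Finset.sum_subset Finset.inter_subset_right
      intro n h1 h2
      have : ¬ n ≤ m := fun h => h2 (Finset.mem_inter.mpr ⟨Finset.mem_Iic.mpr h, h1⟩)
      simp [this]
    rw [Finset.sum_congr rfl fun m _ => h1 m, Finset.sum_comm, hs]
    push_cast
    apply Finset.sum_congr rfl
    intro n hn
    rw [← Finset.mul_sum]
    have h2 : ∑ m ∈ T, (if n ≤ m then q (m - n) * g m else 0) = G n := by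
      have e1 : ∑ m ∈ S.image (fun k => n + k), (if n ≤ m then q (m - n) * g m else 0) =
          ∑ m ∈ T, (if n ≤ m then q (m - n) * g m else 0) := by
        apply Finset.sum_subset
        · intro m hm
          obtain ⟨k, hk, rfl⟩ := Finset.mem_image.mp hm
          exact Finset.mem_image.mpr ⟨(n, k), Finset.mem_product.mpr ⟨hn, hk⟩, rfl⟩
        · intro m _ hm
          split_ifs with h
          · have : m - n ∉ S := fun hk =>
              hm (Finset.mem_image.mpr ⟨m - n, hk, add_tsub_cancel_of_le h⟩)
            simp [hq _ this]
          · rfl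
      rw [← e1, Finset.sum_image (fun a _ b _ h => by simpa using h)]
      simp [hG]
    rw [h2]
    simp only [hf, if_pos hn]
    rw [mul_right_comm, ← Complex.normSq_eq_conj_mul_self, Complex.normSq_eq_norm_sq]
    push_cast
    rfl
  have hcs : s ≤ l2Norm d g * hdNorm d (mconv d φ f) := by
    have e0 : s = ‖∑ m ∈ T, g m * mconv d φ f m‖ := by
      rw [← hpair, Complex.norm_real, Real.norm_eq_abs, abs_of_nonneg hs0]
    have e1 : s ≤ ∑ m ∈ T, (‖g m‖ * Real.sqrt (beta d m)) *
        (‖mconv d φ f m‖ / Real.sqrt (beta d m)) := by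
      rw [e0]
      refine (norm_sum_le _ _).trans (le_of_eq ?_)
      apply Finset.sum_congr rfl
      intro m _
      have := Real.sqrt_pos.mpr (beta_pos d m)
      rw [norm_mul]
      field_simp
    refine e1.trans ((Real.sum_mul_le_sqrt_mul_sqrt _ _ _).trans ?_)
    have e2 : ∀ m, (‖g m‖ * Real.sqrt (beta d m)) ^ 2 = ‖g m‖ ^ 2 * beta d m := fun m => by
      rw [mul_pow, Real.sq_sqrt (beta_pos d m).le]
    have e3 : ∀ m, (‖mconv d φ f m‖ / Real.sqrt (beta d m)) ^ 2 =
        ‖mconv d φ f m‖ ^ 2 / beta d m := fun m => by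
      rw [div_pow, Real.sq_sqrt (beta_pos d m).le]
    simp only [e2, e3]
    unfold l2Norm hdNorm
    gcongr
    · exact hg.2.sum_le_tsum _ (fun m _ => mul_nonneg (by positivity) (beta_pos d m).le)
    · exact (hφ f hfm).sum_le_tsum _ (fun m _ => div_nonneg (by positivity) (beta_pos d m).le)
  have hl : 0 ≤ l2Norm d g := Real.sqrt_nonneg _
  have h3 := hb f hfm
  rw [hfN] at h3
  have h4 : Real.sqrt s ^ 2 = s := Real.sq_sqrt hs0
  have h5 : Real.sqrt s * Real.sqrt s ≤ (M * l2Norm d g) * Real.sqrt s := by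
    calc Real.sqrt s * Real.sqrt s = s := by rw [← sq, h4]
      _ ≤ _ := hcs
      _ ≤ l2Norm d g * (M * Real.sqrt s) := by gcongr
      _ = _ := by ring
  have h6 : Real.sqrt s ≤ M * l2Norm d g := by
    rcases (Real.sqrt_nonneg s).eq_or_lt with h | h
    · rw [← h]; positivity
    · exact le_of_mul_le_mul_right h5 h
  rw [← h4]
  gcongr

lemma transfer' (d : ℕ) (X : Set (Idx d)) (hX : MonotoneSet d X) (q φ : Idx d → ℂ)
    (S : Finset (Idx d)) (hq : ∀ k ∉ S, q k = 0) (hφ : IsMultiplier d φ)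
    (hφq : ∀ n ∈ X, φ n = q n) (M : ℝ) (hM : 0 ≤ M)
    (hb : ∀ a, MemHd d a → hdNorm d (mconv d φ a) ≤ M * hdNorm d a)
    (g : Idx d → ℂ) (hg : MemL2 d X g) :
    (Summable fun n => ‖∑ k ∈ S, q k * g (n + k)‖ ^ 2 * beta d n) ∧
    l2Norm d (fun n => ∑ k ∈ S, q k * g (n + k)) ≤ M * l2Norm d g := by
  have h0 : ∀ n, 0 ≤ ‖∑ k ∈ S, q k * g (n + k)‖ ^ 2 * beta d n :=
    fun n => mul_nonneg (by positivity) (beta_pos d n).le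
  have h := transfer d X hX q φ S hq hφ hφq M hM hb g hg
  have hsum := summable_of_sum_le h0 h
  refine ⟨hsum, ?_⟩
  have hl : 0 ≤ l2Norm d g := Real.sqrt_nonneg _
  conv_lhs => unfold l2Norm
  apply Real.sqrt_le_iff.mpr
  exact ⟨by positivity, hsum.tsum_le_of_sum_le h⟩

/-- coefficient space to `lp`. -/
lemma memHd_iff (d : ℕ) (a : Idx d → ℂ) :
    MemHd d a ↔ Memℓp (fun n => a n / (Real.sqrt (beta d n) : ℂ)) 2 := by
  rw [memℓp_gen_iff (by norm_num)]
  unfold MemHd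
  apply summable_congr
  intro n
  simp [div_pow, Real.sq_sqrt (beta_pos d n).le]

lemma hdNorm_lp (d : ℕ) (x : lp (fun _ : Idx d => ℂ) 2) (a : Idx d → ℂ)
    (h : ∀ n, x n = a n / (Real.sqrt (beta d n) : ℂ)) : hdNorm d a = ‖x‖ := by
  unfold hdNorm
  rw [lp.norm_eq_tsum_rpow (by norm_num), Real.sqrt_eq_rpow]
  norm_num
  congr 1
  apply tsum_congr
  intro n
  rw [h n]
  simp [div_pow, Real.sq_sqrt (beta_pos d n).le]

lemma multiplier_bounded (d : ℕ) (φ : Idx d → ℂ) (hφ : IsMultiplier d φ) :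
    ∃ C, 0 ≤ C ∧ ∀ a, MemHd d a → hdNorm d (mconv d φ a) ≤ C * hdNorm d a := by
  set w : Idx d → ℂ := fun n => (Real.sqrt (beta d n) : ℂ) with hw
  have hw0 : ∀ n, w n ≠ 0 := fun n => by
    simp [hw, (Real.sqrt_pos.mpr (beta_pos d n)).ne']
  have hU : ∀ x : lp (fun _ : Idx d => ℂ) 2, MemHd d (fun n => x n * w n) := by
    intro x
    rw [memHd_iff]
    have : (fun n => x n * w n / (Real.sqrt (beta d n) : ℂ)) = fun n => x n :=
      funext fun n => mul_div_cancel_right₀ _ (hw0 n)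
    rw [this]
    exact lp.memℓp x
  let T : lp (fun _ : Idx d => ℂ) 2 →ₗ[ℂ] lp (fun _ : Idx d => ℂ) 2 :=
    { toFun := fun x => ⟨fun m => mconv d φ (fun n => x n * w n) m / w m,
        (memHd_iff d _).mp (hφ _ (hU x))⟩
      map_add' := by
        intro x y
        ext m
        simp only [mconv, lp.coeFn_add, Pi.add_apply]
        rw [← add_div, ← Finset.sum_add_distrib]
        congr 1
        apply Finset.sum_congr rfl
        intro k _
        ring
      map_smul' := by
        intro c x
        ext m
        simp only [mconv, lp.coeFn_smul, Pi.smul_apply, smul_eq_mul, RingHom.id_apply]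
        rw [← mul_div_assoc, Finset.mul_sum]
        congr 1
        apply Finset.sum_congr rfl
        intro k _
        ring }
  have hTa : ∀ x m, T x m = mconv d φ (fun n => x n * w n) m / w m := fun x m => rfl
  have hcoord : ∀ m : Idx d, Continuous fun x : lp (fun _ : Idx d => ℂ) 2 => x m := fun m =>
    (continuous_apply m).comp (lp.uniformContinuous_coe (E := fun _ : Idx d => ℂ) (p := 2)).continuous
  have hcont : Continuous T := by
    apply LinearMap.continuous_of_seq_closed_graph
    intro u x y hu hTu
    ext m
    have h1 : Filter.Tendsto (fun i => T (u i) m) Filter.atTop (nhds (y m)) :=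
      ((hcoord m).tendsto y).comp hTu
    have h2 : Filter.Tendsto (fun i => T (u i) m) Filter.atTop (nhds (T x m)) := by
      have : Continuous fun x => T x m := by
        simp only [hTa, mconv]
        refine Continuous.div_const (continuous_finsetSum _ fun k _ => ?_) _
        exact continuous_const.mul ((hcoord _).mul continuous_const)
      exact (this.tendsto x).comp hu
    exact tendsto_nhds_unique h1 h2
  let T' : lp (fun _ : Idx d => ℂ) 2 →L[ℂ] lp (fun _ : Idx d => ℂ) 2 := ⟨T, hcont⟩
  refine ⟨‖T'‖, norm_nonneg _, fun a ha => ?_⟩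
  let x : lp (fun _ : Idx d => ℂ) 2 := ⟨_, (memHd_iff d a).mp ha⟩
  have hx : ∀ n, x n = a n / w n := fun n => rfl
  have hxa : (fun n => x n * w n) = a := funext fun n => by
    rw [hx, div_mul_cancel₀ _ (hw0 n)]
  have := T'.le_opNorm x
  rw [← hdNorm_lp d x a hx] at this
  rw [hdNorm_lp d (T' x) (mconv d φ a)]
  · exact this
  · intro m
    have := hTa x m
    rw [hxa] at this
    exact this

/-! ### The dilation argument -/

section Dilation

variable {H : Type*} [NormedAddCommGroup H] [InnerProductSpace ℂ H] [CompleteSpace H]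

/-- the energy `∑ β(n) ‖F n‖²` in `[0,∞]`. -/
def energy (d : ℕ) {E : Type*} [NormedAddCommGroup E] (F : Idx d → E) : ENNReal :=
  ∑' n, ENNReal.ofReal (beta d n) * ENNReal.ofReal (‖F n‖ ^ 2)

lemma energy_finite (d : ℕ) (P : Idx d → H →L[ℂ] H) (hP0 : P 0 = 1)
    (hadd : ∀ n m, P (n + m) = P n * P m) (ρ : ℝ) (hρ0 : 0 ≤ ρ) (hρ : ρ < 1)
    (hrow : ∀ h : H, ∑ j, ‖P (e d j) h‖ ^ 2 ≤ ρ * ‖h‖ ^ 2) (h : H) :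
    energy d (fun n => P n h) ≠ ⊤ := by
  classical
  set b : Idx d → ENNReal := fun n => ENNReal.ofReal (beta d n) with hb
  set f : Idx d → ENNReal := fun n => ENNReal.ofReal (‖P n h‖ ^ 2) with hf
  have hstep : ∀ n, ∑ j, f (n + e d j) ≤ ENNReal.ofReal ρ * f n := by
    intro n
    simp only [hf]
    rw [← ENNReal.ofReal_mul hρ0, ← ENNReal.ofReal_sum_of_nonneg (fun _ _ => by positivity)]
    apply ENNReal.ofReal_le_ofReal
    have := hrow (P n h)
    refine le_trans (le_of_eq ?_) this
    apply Finset.sum_congr rfl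
    intro j _
    rw [add_comm n, hadd]
    rfl
  have hbound : ∀ N : Idx d, ∑ n ∈ Finset.Iic N, b n * f n ≤
      ENNReal.ofReal (‖h‖ ^ 2 / (1 - ρ)) := by
    intro N
    set f' : Idx d → ENNReal := fun n => if n ≤ N then f n else 0 with hf'
    have h1 : ∑' n, b n * f' n = ∑ n ∈ Finset.Iic N, b n * f n := by
      rw [tsum_eq_sum (s := Finset.Iic N)]
      · apply Finset.sum_congr rfl
        intro n hn
        rw [Finset.mem_Iic] at hn
        simp [hf', hn]
      · intro n hn
        rw [Finset.mem_Iic] at hn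
        simp [hf', hn]
    set W := ∑ n ∈ Finset.Iic N, b n * f n with hW
    have hWtop : W ≠ ⊤ := by
      rw [hW]
      refine (ENNReal.sum_lt_top.mpr fun n _ => ?_).ne
      exact ENNReal.mul_lt_top ENNReal.ofReal_lt_top ENNReal.ofReal_lt_top
    have h2 : W ≤ ENNReal.ofReal (‖h‖ ^ 2) + ENNReal.ofReal ρ * W := by
      conv_lhs => rw [← h1]
      rw [pascal_tsum d f']
      gcongr
      · simp [hf', hf, hP0]
      · rw [← h1, ← ENNReal.tsum_mul_left]
        apply ENNReal.tsum_le_tsum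
        intro n
        rw [mul_left_comm]
        apply mul_le_mul_right
        by_cases hn : n ≤ N
        · simp only [hf', hn, if_true]
          refine le_trans (Finset.sum_le_sum fun j _ => ?_) (hstep n)
          split_ifs <;> simp
        · rw [Finset.sum_eq_zero]
          · simp
          · intro j _
            have : ¬ n + e d j ≤ N := fun hh => hn (le_trans (le_add_of_nonneg_right (by simp)) hh)
            simp [hf', this]
    obtain ⟨W', hW'⟩ : ∃ w : ℝ, 0 ≤ w ∧ W = ENNReal.ofReal w :=
      ⟨W.toReal, ENNReal.toReal_nonneg, (ENNReal.ofReal_toReal hWtop).symm⟩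
    rw [hW'.2] at h2 ⊢
    have hnn : 0 ≤ ρ * W' := mul_nonneg hρ0 hW'.1
    rw [← ENNReal.ofReal_mul hρ0, ← ENNReal.ofReal_add (by positivity) hnn,
      ENNReal.ofReal_le_ofReal_iff (by positivity)] at h2
    apply ENNReal.ofReal_le_ofReal
    rw [le_div_iff₀ (by linarith)]
    nlinarith
  refine ne_top_of_le_ne_top (b := ENNReal.ofReal (‖h‖ ^ 2 / (1 - ρ))) ENNReal.ofReal_ne_top ?_
  unfold energy
  rw [ENNReal.tsum_eq_iSup_sum]
  apply iSup_le
  intro s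
  refine le_trans ?_ (hbound (s.sup id))
  apply Finset.sum_le_sum_of_subset
  intro n hn
  rw [Finset.mem_Iic]
  exact Finset.le_sup (f := id) hn

lemma energy_defect (d : ℕ) (P : Idx d → H →L[ℂ] H) (hP0 : P 0 = 1)
    (hadd : ∀ n m, P (n + m) = P n * P m) (D : H →L[ℂ] H)
    (hD : ∀ x : H, ‖D x‖ ^ 2 + ∑ j, ‖P (e d j) x‖ ^ 2 = ‖x‖ ^ 2) (h : H)
    (hfin : energy d (fun n => P n h) ≠ ⊤) :
    energy d (fun n => D (P n h)) = ENNReal.ofReal (‖h‖ ^ 2) := by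
  set R := ∑' n, ENNReal.ofReal (beta d n) * ∑ j, ENNReal.ofReal (‖P (n + e d j) h‖ ^ 2) with hR
  have h1 : energy d (fun n => P n h) = ENNReal.ofReal (‖h‖ ^ 2) + R := by
    unfold energy
    rw [pascal_tsum d (fun n => ENNReal.ofReal (‖P n h‖ ^ 2))]
    simp [hP0, hR]
  have h2 : energy d (fun n => P n h) = energy d (fun n => D (P n h)) + R := by
    unfold energy
    rw [hR, ← ENNReal.tsum_add]
    apply tsum_congr
    intro n
    rw [← mul_add, ← ENNReal.ofReal_sum_of_nonneg (fun _ _ => by positivity),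
      ← ENNReal.ofReal_add (by positivity) (by positivity)]
    congr 2
    rw [← hD (P n h)]
    congr 1
    apply Finset.sum_congr rfl
    intro j _
    rw [add_comm n, hadd]
    rfl
  have hRfin : R ≠ ⊤ := by
    refine ne_top_of_le_ne_top hfin ?_
    rw [h1]
    exact le_add_self
  rw [h1] at h2
  exact ((ENNReal.add_left_inj hRfin).mp h2).symm

lemma exists_defect (d : ℕ) (T : Fin d → H →L[ℂ] H)
    (hrow : ∀ h : H, ∑ j, ‖T j h‖ ^ 2 ≤ ‖h‖ ^ 2) :
    ∃ D : H →L[ℂ] H, ∀ x : H, ‖D x‖ ^ 2 + ∑ j, ‖T j x‖ ^ 2 = ‖x‖ ^ 2 := by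
  set S : H →L[ℂ] H := 1 - ∑ j, star (T j) * T j with hS
  have hstar : ∀ (B : H →L[ℂ] H) (x : H), inner ℂ ((star B * B) x) x = ((‖B x‖ ^ 2 : ℝ) : ℂ) := by
    intro B x
    rw [ContinuousLinearMap.star_eq_adjoint, mul_apply_eq_comp,
      ContinuousLinearMap.adjoint_inner_left, inner_self_eq_norm_sq_to_K]
    push_cast
    rfl
  have hSin : ∀ x, inner ℂ (S x) x = ((‖x‖ ^ 2 - ∑ j, ‖T j x‖ ^ 2 : ℝ) : ℂ) := by
    intro x
    have := hstar 1 x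
    simp only [star_one, one_mul, one_apply_eq_self] at this
    rw [hS, sub_apply, inner_sub_left, one_apply_eq_self, this,
      sum_apply, sum_inner, Finset.sum_congr rfl fun j _ => hstar (T j) x]
    push_cast
    rfl
  have hpos : 0 ≤ S := by
    rw [ContinuousLinearMap.nonneg_iff_isPositive, ContinuousLinearMap.isPositive_iff_complex]
    intro x
    rw [hSin]
    constructor
    · exact congrArg _ (Complex.ofReal_re _)
    · refine le_of_le_of_eq (sub_nonneg.mpr (hrow x)) (Complex.ofReal_re _).symm
  obtain ⟨D, hD⟩ := (CStarAlgebra.nonneg_iff_eq_star_mul_self).mp hpos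
  refine ⟨D, fun x => ?_⟩
  have h1 := hSin x
  rw [hD, hstar] at h1
  have h2 := Complex.ofReal_injective h1
  linarith

lemma energy_basis (d : ℕ) {ι : Type*} (b : HilbertBasis ι ℂ H) (F : Idx d → H) :
    energy d F = ∑' i, energy d (fun n => inner ℂ (b i) (F n)) := by
  unfold energy
  rw [ENNReal.tsum_comm]
  apply tsum_congr
  intro n
  rw [ENNReal.tsum_mul_left]
  congr 1
  have h1 : HasSum (fun i => ‖inner ℂ (b i) (F n)‖ ^ 2) (‖F n‖ ^ 2) := by
    have h := b.hasSum_inner_mul_inner (F n) (F n)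
    have h2 := (Complex.reCLM.hasSum h)
    convert h2 using 1
    · funext i
      rw [← inner_conj_symm (F n) (b i), ← Complex.normSq_eq_conj_mul_self,
        Complex.normSq_eq_norm_sq]
      exact (Complex.ofReal_re _).symm
    · rw [inner_self_eq_norm_sq_to_K]
      norm_cast
  rw [← h1.tsum_eq, ENNReal.ofReal_tsum_of_nonneg (fun _ => by positivity) h1.summable]

lemma energy_eq_l2 (d : ℕ) (g : Idx d → ℂ) (hg : Summable fun n => ‖g n‖ ^ 2 * beta d n) :
    energy d g = ENNReal.ofReal (l2Norm d g ^ 2) := by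
  have h0 : ∀ n, 0 ≤ ‖g n‖ ^ 2 * beta d n := fun n => mul_nonneg (by positivity) (beta_pos d n).le
  unfold energy l2Norm
  rw [Real.sq_sqrt (tsum_nonneg h0), ENNReal.ofReal_tsum_of_nonneg h0 hg]
  apply tsum_congr
  intro n
  rw [← ENNReal.ofReal_mul (beta_pos d n).le, mul_comm]

lemma summable_of_energy (d : ℕ) (g : Idx d → ℂ) (hg : energy d g ≠ ⊤) :
    Summable fun n => ‖g n‖ ^ 2 * beta d n := by
  have h0 : ∀ n, 0 ≤ ‖g n‖ ^ 2 * beta d n := fun n => mul_nonneg (by positivity) (beta_pos d n).le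
  have := ENNReal.summable_toReal hg
  refine this.congr fun n => ?_
  rw [← ENNReal.ofReal_mul (beta_pos d n).le, mul_comm, ENNReal.toReal_ofReal (h0 n)]

lemma dilation (d : ℕ) (X : Set (Idx d)) (P : Idx d → H →L[ℂ] H) (hP0 : P 0 = 1)
    (hadd : ∀ n m, P (n + m) = P n * P m) (ρ : ℝ) (hρ0 : 0 ≤ ρ) (hρ : ρ < 1)
    (hrow : ∀ h : H, ∑ j, ‖P (e d j) h‖ ^ 2 ≤ ρ * ‖h‖ ^ 2)
    (hPX : ∀ n ∉ X, P n = 0) (q : Idx d → ℂ) (S : Finset (Idx d)) (C : ℝ) (hC : 0 ≤ C)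
    (hbd : ∀ g, MemL2 d X g → (Summable fun n => ‖∑ k ∈ S, q k * g (n + k)‖ ^ 2 * beta d n) ∧
      l2Norm d (fun n => ∑ k ∈ S, q k * g (n + k)) ≤ C * l2Norm d g) :
    ‖∑ k ∈ S, q k • P k‖ ≤ C := by
  obtain ⟨D, hD⟩ := exists_defect d (fun j => P (e d j)) (fun h => (hrow h).trans (by
    nlinarith [sq_nonneg ‖h‖]))
  have hiso : ∀ h : H, energy d (fun n => D (P n h)) = ENNReal.ofReal (‖h‖ ^ 2) := fun h =>
    energy_defect d P hP0 hadd D hD h (energy_finite d P hP0 hadd ρ hρ0 hρ hrow h)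
  obtain ⟨w, b, -⟩ := exists_hilbertBasis ℂ H
  refine ContinuousLinearMap.opNorm_le_bound _ hC fun h => ?_
  set y := (∑ k ∈ S, q k • P k) h with hy
  set g : w → Idx d → ℂ := fun i n => inner ℂ (b i) (D (P n h)) with hg
  have hsum : ∑' i, energy d (g i) = ENNReal.ofReal (‖h‖ ^ 2) := by
    rw [← hiso h, energy_basis d b]
  have hmem : ∀ i, MemL2 d X (g i) := by
    intro i
    refine ⟨fun n hn => by simp [hg, hPX n hn], summable_of_energy d _ ?_⟩
    refine ne_top_of_le_ne_top (b := ∑' i, energy d (g i)) ?_ (ENNReal.le_tsum i)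
    rw [hsum]
    exact ENNReal.ofReal_ne_top
  have hy2 : ∀ i n, inner ℂ (b i) (D (P n y)) = ∑ k ∈ S, q k * g i (n + k) := by
    intro i n
    rw [hy, sum_apply, map_sum, map_sum, inner_sum]
    apply Finset.sum_congr rfl
    intro k _
    rw [smul_apply, map_smul, map_smul, inner_smul_right]
    simp only [hg, hadd]
    rfl
  have hfin : ENNReal.ofReal (‖y‖ ^ 2) ≤ ENNReal.ofReal (C ^ 2) * ENNReal.ofReal (‖h‖ ^ 2) := by
    rw [← hiso y, energy_basis d b, ← hsum, ← ENNReal.tsum_mul_left]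
    apply ENNReal.tsum_le_tsum
    intro i
    simp only [hy2]
    obtain ⟨h1, h2⟩ := hbd (g i) (hmem i)
    rw [energy_eq_l2 d _ h1, energy_eq_l2 d _ (hmem i).2, ← ENNReal.ofReal_mul (by positivity)]
    apply ENNReal.ofReal_le_ofReal
    rw [← mul_pow]
    have : 0 ≤ l2Norm d (fun n => ∑ k ∈ S, q k * g i (n + k)) := Real.sqrt_nonneg _
    gcongr
  rw [← ENNReal.ofReal_mul (by positivity), ENNReal.ofReal_le_ofReal_iff (by positivity),
    ← mul_pow] at hfin
  exact (sq_le_sq₀ (norm_nonneg _) (by positivity)).mp hfin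

end Dilation

/-- **Drury-type inequality.** Let `A = (A_1,…,A_d)`, `d ≥ 2`, be a commuting
row contraction on a complex Hilbert space `H`, let `N = {n : A^n = 0}` and `X = ℕ^d ∖ N`.
Then for every complex polynomial `Q` of `d` variables,
`‖Q(A)‖ ≤ ‖Q(B^X)‖ ≤ inf{‖φ‖_{M(H_d)} : φ multiplier of H_d, φ̂(n) = Q̂(n) ∀ n ∈ X}`. -/
theorem drury_inequality (d : ℕ) (hd : 2 ≤ d) {H : Type*} [NormedAddCommGroup H]
    [InnerProductSpace ℂ H] [CompleteSpace H] (A : Fin d → H →L[ℂ] H)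
    (hcomm : ∀ i j, A i ∘L A j = A j ∘L A i)
    (hrow : ∀ h : H, ∑ j, ‖A j h‖ ^ 2 ≤ ‖h‖ ^ 2)
    (X : Set (Idx d)) (hXdef : X = {n : Idx d | ApowCLM d A n ≠ 0})
    (Q : MvPolynomial (Fin d) ℂ) :
    ‖QevalCLM d A Q‖ ≤ opNormL2 d X (polyOp d Q (BXop d X)) ∧
    opNormL2 d X (polyOp d Q (BXop d X)) ≤
      sInf {r : ℝ | ∃ φ : Idx d → ℂ, IsMultiplier d φ ∧
        (∀ n ∈ X, φ n = Qhat d Q n) ∧ r = multNorm d φ} := by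
  classical
  set P : Idx d → H →L[ℂ] H := ApowCLM d A with hP
  have hcm : ∀ i j, Commute (A i) (A j) := fun i j => hcomm i j
  have hP0 : P 0 = 1 := by simp [hP, ApowCLM]
  have hadd : ∀ n m, P (n + m) = P n * P m := fun n m => listPow_add d A hcm n m
  have hPe : ∀ j, P (e d j) = A j := fun j => listPow_single d A j
  have hPX : ∀ n ∉ X, P n = 0 := by
    intro n hn
    rw [hXdef] at hn
    simpa using hn
  have hX : MonotoneSet d X := by
    intro n hn j
    have := hPX n hn
    rw [hXdef]
    simp only [Set.mem_ofPred_eq, not_not]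
    change P (n + e d j) = 0
    rw [hadd, this, zero_mul]
  set q : Idx d → ℂ := Qhat d Q with hqdef
  set S : Finset (Idx d) := Q.support.image (fun k : Fin d →₀ ℕ => (⇑k : Idx d)) with hS
  have hinj : ∀ a ∈ Q.support, ∀ b ∈ Q.support, (⇑a : Idx d) = ⇑b → a = b :=
    fun a _ b _ h => DFunLike.coe_injective h
  have hqc : ∀ k : Fin d →₀ ℕ, q ⇑k = Q.coeff k := by
    intro k
    simp only [hqdef, Qhat]
    congr 1
    ext i
    simp
  have hq : ∀ k ∉ S, q k = 0 := by
    intro k hk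
    by_contra hc
    apply hk
    refine Finset.mem_image.mpr ⟨Finsupp.equivFunOnFinite.symm k, ?_, ?_⟩
    · exact MvPolynomial.mem_support_iff.mpr hc
    · funext i; simp
  have hpoly : ∀ g, MemL2 d X g →
      polyOp d Q (BXop d X) g = fun n => ∑ k ∈ S, q k * g (n + k) := by
    intro g hg
    funext n
    rw [polyOp_BX d X hX Q g hg.1, hS, Finset.sum_image hinj]
    simp only [hqc]
  have hQeval : QevalCLM d A Q = ∑ k ∈ S, q k • P k := by
    unfold QevalCLM
    rw [hS, Finset.sum_image hinj]
    simp only [hqc, hP]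
  have hqm : IsMultiplier d q := finite_isMultiplier d q S hq
  obtain ⟨M, hM0, hM⟩ := multiplier_bounded d q hqm
  have hqb := transfer' d X hX q q S hq hqm (fun _ _ => rfl) M hM0 hM
  constructor
  · unfold opNormL2
    refine le_csInf ⟨M, hM0, fun g hg => ?_⟩ ?_
    · rw [hpoly g hg]
      exact (hqb g hg).2
    · rintro C ⟨hC0, hC⟩
      rw [hQeval]
      have hr : ∀ r ∈ Set.Ioo (0:ℝ) 1,
          ‖∑ k ∈ S, q k • (((r : ℂ) ^ (∑ i, k i)) • P k)‖ ≤ C := by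
        rintro r ⟨hr0, hr1⟩
        refine dilation d X (fun k => ((r : ℂ) ^ (∑ i, k i)) • P k) ?_ ?_ (r ^ 2) (by positivity)
          (by nlinarith) ?_ ?_ q S C hC0 ?_
        · simp [hP0]
        · intro n m
          simp only [Pi.add_apply, Finset.sum_add_distrib, pow_add, hadd]
          rw [smul_mul_smul_comm]
        · intro h
          simp only [sum_e, pow_one, hPe, smul_apply, norm_smul,
            Complex.norm_real, mul_pow, Real.norm_eq_abs, sq_abs]
          rw [← Finset.mul_sum]
          exact mul_le_mul_of_nonneg_left (hrow h) (by positivity)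
        · intro n hn
          simp [hPX n hn]
        · intro g hg
          refine ⟨(hqb g hg).1, ?_⟩
          rw [← hpoly g hg]
          exact hC g hg
      have hcont : Continuous fun r : ℝ => ‖∑ k ∈ S, q k • (((r : ℂ) ^ (∑ i, k i)) • P k)‖ := by
        fun_prop
      have hlim := (hcont.tendsto 1).mono_left (nhdsWithin_le_nhds (s := Set.Iio (1:ℝ)))
      simp only [Complex.ofReal_one, one_pow, one_smul] at hlim
      refine le_of_tendsto hlim ?_
      filter_upwards [Ioo_mem_nhdsLT (show (0:ℝ) < 1 by norm_num)] with r hr'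
      exact hr r hr'
  · refine le_csInf ⟨_, q, hqm, fun _ _ => rfl, rfl⟩ ?_
    rintro r ⟨φ, hφ, hφq, rfl⟩
    obtain ⟨C0, hC0⟩ := multiplier_bounded d φ hφ
    unfold multNorm
    refine le_csInf ⟨C0, hC0⟩ ?_
    rintro C ⟨hCn, hC⟩
    unfold opNormL2
    refine csInf_le ⟨0, fun x hx => hx.1⟩ ⟨hCn, fun g hg => ?_⟩
    rw [hpoly g hg]
    exact (transfer' d X hX q φ S hq hφ hφq C hCn hC g hg).2

end DruryArveson
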